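/- Let x₀ ∈ ℝ², r > 0 and γ ∈ ℝ, and let z(α) = x₀ + r·(cos 2πα, sin 2πα) for α ∈ [0,1]. Define v(x) = 2πr·γ·∫₀¹ K₂( x − z(α) ) dα for x ∉ z([0,1]). Then v(x) = 0 whenever |x − x₀| < r, and v(x) = r·γ·(x − x₀)^⊥ / |x − x₀|² whenever |x − x₀| > r. -/

import Mathlib

open MeasureTheory Real Set Filter Metric Function Topology

noncomputable section

abbrev E2 := EuclideanSpace ℝ (Fin 2)

def perp2 (x : E2) : E2 := (WithLp.equiv 2 (Fin 2 → ℝ)).symm ![-(x 1), x 0]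

def K2 (x : E2) : E2 := (2 * π * ‖x‖ ^ 2)⁻¹ • perp2 x

def dS (cc : Bool) (α β : ℝ) : ℝ := if cc then min |α - β| (1 - |α - β|) else |α - β|

def nv (z : ℝ → E2) (L α : ℝ) : E2 := L⁻¹ • perp2 (deriv z α)

def Rm (z : ℝ → E2) (γ : ℝ → ℝ) (L ε α η : ℝ) : E2 :=
  z α + (ε * γ α * η) • nv z L α

def Dset (cc : Bool) (z : ℝ → E2) (γ : ℝ → ℝ) (L ε : ℝ) : Set E2 :=
  {x | ∃ α ∈ (if cc then Icc (0:ℝ) 1 else Ioo (0:ℝ) 1), ∃ η ∈ Ioo (-1:ℝ) 0,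
    x = Rm z γ L ε α η}

def e2 (i : Fin 2) : E2 := EuclideanSpace.single i (1:ℝ)

def lap (v : E2 → ℝ) (x : E2) : ℝ :=
  fderiv ℝ (fun y => fderiv ℝ v y (e2 0)) x (e2 0) +
  fderiv ℝ (fun y => fderiv ℝ v y (e2 1)) x (e2 1)

/- STATEMENT 18 -/
def circ (x₀ : E2) (r α : ℝ) : E2 :=
  x₀ + (WithLp.equiv 2 (Fin 2 → ℝ)).symm ![r * Real.cos (2 * π * α), r * Real.sin (2 * π * α)]

def rotL : ℂ →L[ℝ] E2 :=
  LinearMap.toContinuousLinearMap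
    { toFun := fun c => (2 * π)⁻¹ • (WithLp.equiv 2 (Fin 2 → ℝ)).symm ![-c.im, c.re]
      map_add' := by
        intro a b
        ext i
        fin_cases i <;> simp <;> ring
      map_smul' := by
        intro a b
        ext i
        fin_cases i <;> simp <;> ring }

lemma rotL_apply (c : ℂ) :
    rotL c = (2 * π)⁻¹ • (WithLp.equiv 2 (Fin 2 → ℝ)).symm ![-c.im, c.re] := rfl

def toC (x : E2) : ℂ := ⟨x 0, x 1⟩

lemma norm_toC (x : E2) : ‖toC x‖ = ‖x‖ := by
  rw [EuclideanSpace.norm_eq, Complex.norm_eq_sqrt_sq_add_sq]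
  simp [toC, Fin.sum_univ_two]

lemma K2_eq (x : E2) : K2 x = rotL (starRingEnd ℂ ((toC x)⁻¹)) := by
  have h : Complex.normSq (toC x) = ‖x‖ ^ 2 := by
    rw [Complex.normSq_eq_norm_sq, norm_toC]
  rw [rotL_apply, K2, perp2]
  ext i
  fin_cases i <;> simp [h] <;> simp [toC] <;> ring

lemma toC_sub_circ (x₀ x : E2) (r α : ℝ) :
    toC (x - circ x₀ r α) = toC (x - x₀) - circleMap 0 r (2 * π * α) := by
  apply Complex.ext
  · simp [toC, circ, circleMap_zero]
    simp [Complex.exp_re]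
    ring
  · simp [toC, circ, circleMap_zero]
    simp [Complex.exp_im]
    ring

lemma int_avg (L : ℂ →L[ℝ] E2) (f : ℂ → ℂ) (r : ℝ) (hf : CircleIntegrable f 0 r) :
    ∫ α in (0:ℝ)..1, L (f (circleMap 0 r (2 * π * α))) = L (Real.circleAverage f 0 r) := by
  rw [intervalIntegral.integral_comp_mul_left
    (fun t => L (f (circleMap 0 r t))) (by positivity : (2 * π : ℝ) ≠ 0)]
  rw [Real.circleAverage_def, L.map_smul]
  rw [mul_zero, mul_one, L.intervalIntegral_comp_comm hf]

lemma avg_eq (f : ℂ → ℂ) (r : ℝ) (hr : 0 < r)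
    (hf : DifferentiableOn ℂ f (closedBall 0 r)) :
    CircleIntegrable f 0 r ∧ Real.circleAverage f 0 r = f 0 := by
  constructor
  · exact (hf.continuousOn.mono sphere_subset_closedBall).circleIntegrable hr.le
  · apply DiffContOnCl.circleAverage
    rw [abs_of_pos hr]
    exact hf.diffContOnCl_ball le_rfl

lemma inside (x₀ : E2) (r : ℝ) (hr : 0 < r) (x : E2) (h : dist x x₀ < r) :
    ∫ α in (0:ℝ)..1, K2 (x - circ x₀ r α) = 0 := by
  set w := toC (x - x₀) with hw
  have hwn : ‖w‖ < r := by rw [hw, norm_toC, ← dist_eq_norm]; exact h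
  have hden : ∀ z ∈ closedBall (0:ℂ) r, starRingEnd ℂ w * z - (r:ℂ) ^ 2 ≠ 0 := by
    intro z hz h0
    have hz' : ‖z‖ ≤ r := by simpa using hz
    have h1 := congrArg norm (sub_eq_zero.1 h0)
    rw [norm_mul, RCLike.norm_conj, norm_pow, Complex.norm_real, Real.norm_of_nonneg hr.le] at h1
    nlinarith [norm_nonneg w, norm_nonneg z]
  obtain ⟨h1, h2⟩ := avg_eq (fun z => z / (starRingEnd ℂ w * z - (r:ℂ) ^ 2)) r hr
    (DifferentiableOn.div (by fun_prop) (by fun_prop) hden)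
  have h3 := int_avg rotL _ r h1
  rw [h2] at h3
  simp only [zero_div, map_zero] at h3
  rw [← h3]
  congr 1
  ext1 α
  rw [K2_eq, toC_sub_circ, ← hw]
  set z := circleMap 0 r (2 * π * α) with hz
  have hzn : ‖z‖ = r := by rw [hz, norm_circleMap_zero, abs_of_pos hr]
  have hz0 : z ≠ 0 := by rw [← norm_pos_iff, hzn]; exact hr
  have hc : starRingEnd ℂ z * z = (r:ℂ) ^ 2 := by
    rw [Complex.conj_mul', hzn]
  have h4 := hden z (by simp [hzn])
  congr 1
  rw [← hc, ← sub_mul, map_inv₀, map_sub] at *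
  field_simp

lemma outside (x₀ : E2) (r : ℝ) (hr : 0 < r) (x : E2) (h : r < dist x x₀) :
    ∫ α in (0:ℝ)..1, K2 (x - circ x₀ r α) = K2 (x - x₀) := by
  set w := toC (x - x₀) with hw
  have hwn : r < ‖w‖ := by rw [hw, norm_toC, ← dist_eq_norm]; exact h
  have hden : ∀ z ∈ closedBall (0:ℂ) r, w - z ≠ 0 := by
    intro z hz h0
    have hz' : ‖z‖ ≤ r := by simpa using hz
    rw [← sub_eq_zero.1 h0] at hz'
    linarith
  obtain ⟨h1, h2⟩ := avg_eq (fun z => (w - z)⁻¹) r hr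
    (DifferentiableOn.inv (by fun_prop) hden)
  have h3 := int_avg (rotL.comp (Complex.conjCLE : ℂ →L[ℝ] ℂ)) _ r h1
  rw [h2] at h3
  rw [K2_eq, ← hw]
  simp only [K2_eq, toC_sub_circ, ← hw]
  simpa using h3

theorem stmt18 (x₀ : E2) (r g : ℝ) (hr : 0 < r) (x : E2) :
    (dist x x₀ < r → (2 * π * r * g) • (∫ α in (0:ℝ)..1, K2 (x - circ x₀ r α)) = 0) ∧
    (r < dist x x₀ → (2 * π * r * g) • (∫ α in (0:ℝ)..1, K2 (x - circ x₀ r α))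
      = (r * g / ‖x - x₀‖ ^ 2) • perp2 (x - x₀)) := by
  constructor
  · intro h
    rw [inside x₀ r hr x h, smul_zero]
  · intro h
    rw [outside x₀ r hr x h, K2, smul_smul]
    congr 1
    have h0 : ‖x - x₀‖ ≠ 0 := by
      rw [← dist_eq_norm]
      linarith
    field_simp

end
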